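/- arXiv:1010.1199 — 7 statements merged into one kernel-verified Lean document; each statement's English description precedes it below -/
import Mathlib

section
/- For every set X and every sequence A : ℕ → Set X, the internal subset of *X = Germ 𝒰 X determined by A is either finite or has cardinality at least 2^ℵ₀. -/
/-!
Suppose the internal set is infinite. Given `k` distinct germs in it, for `𝒰`-almost every `n`
the values at `n` of their representatives are distinct elements of `A n`; hence for every `k`,
almost every `A n` has at least `k` elements (`eventually_le_encard`). One can therefore place
a copy of the binary strings of length `k n` inside `A n`, where `k n → ∞` along `𝒰`
(`exists_separating`). Sending `σ : ℕ → Bool` to the germ of the sequence whose `n`-th term codes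
the first `k n` bits of `σ` embeds Cantor space into the internal set: two different `σ`, `τ`
have different codes as soon as `k n` exceeds a position where they differ.
-/

open Filter Hyperreal

noncomputable section

/-- The internal subset of the ultrapower `*X = Germ 𝒰 X` determined by a sequence of
sets `A : ℕ → Set X`. -/
def InternalSet {X : Type*} (A : ℕ → Set X) : Set (Germ (hyperfilter ℕ : Filter ℕ) X) :=
  {ξ | ∃ f : ℕ → X, ξ = (↑f : Germ (hyperfilter ℕ : Filter ℕ) X) ∧
    {n | f n ∈ A n} ∈ hyperfilter ℕ}

lemma eventually_le_encard {X : Type*} (A : ℕ → Set X) (h : (InternalSet A).Infinite) (k : ℕ) :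
    ∀ᶠ n in (hyperfilter ℕ : Filter ℕ), (k : ℕ∞) ≤ (A n).encard := by
  let g := h.natEmbedding
  choose f hf hfA using fun i => (g i).2
  have hne : ∀ i j : Fin k, ∀ᶠ n in (hyperfilter ℕ : Filter ℕ),
      f i n = f j n → i = j := by
    intro i j
    by_cases hij : i = j
    · simp [hij]
    · have : ¬ ∀ᶠ n in (hyperfilter ℕ : Filter ℕ), f i n = f j n := by
        intro hc
        apply hij
        apply Fin.ext
        apply g.injective
        apply Subtype.ext
        rw [hf, hf]
        exact Germ.coe_eq.2 hc
      filter_upwards [Ultrafilter.eventually_not.2 this] with n hn hn'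
      exact absurd hn' hn
  have hmem : ∀ i : Fin k, ∀ᶠ n in (hyperfilter ℕ : Filter ℕ), f i n ∈ A n := fun i => hfA i
  filter_upwards [eventually_all.2 fun i => eventually_all.2 (hne i), eventually_all.2 hmem]
    with n h1 h2
  have hinj : Function.Injective fun i : Fin k => f i n := fun i j hij => h1 i j hij
  calc (k : ℕ∞) = (Set.range fun i : Fin k => f i n).encard := by
        rw [← Set.image_univ, hinj.encard_image]; simp
    _ ≤ _ := Set.encard_le_encard (by rintro _ ⟨i, rfl⟩; exact h2 i)

/-- A coding of infinite binary sequences by elements of a nonempty set `s`: sequences differing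
at a position `j < n` get different codes whenever `s` has room for all strings of length
`j + 1`. The cutoff `n` guarantees a longest usable string length even if `s` is infinite. -/
lemma exists_separating {X : Type*} (s : Set X) (hs : s.Nonempty) (n : ℕ) :
    ∃ e : (ℕ → Bool) → X, (∀ σ, e σ ∈ s) ∧ ∀ j < n, ((2 ^ (j + 1) : ℕ) : ℕ∞) ≤ s.encard →
      ∀ σ τ, e σ = e τ → σ j = τ j := by
  classical
  let P : ℕ → Prop := fun k => ((2 ^ k : ℕ) : ℕ∞) ≤ s.encard
  let k := Nat.findGreatest P n
  have hk : P k := by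
    apply Nat.findGreatest_spec (P := P) (Nat.zero_le n)
    simpa [P, Set.one_le_encard_iff_nonempty] using hs
  obtain ⟨t, hts, ht⟩ := Set.exists_subset_encard_eq hk
  have hfin : t.Finite := Set.finite_of_encard_eq_coe ht
  have hcard : Nat.card (Fin k → Bool) = Nat.card t := by
    have : t.ncard = 2 ^ k := by simp [Set.ncard, ht]
    rw [Nat.card_coe_set_eq, this]
    simp
  have : Finite t := hfin
  let φ : (Fin k → Bool) ≃ t := (Finite.card_eq.1 hcard).some
  refine ⟨fun σ => φ fun i => σ i, fun σ => hts (φ _).2, ?_⟩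
  intro j hj hjs σ τ h
  have hjk : j + 1 ≤ k := Nat.le_findGreatest hj hjs
  exact congrFun (φ.injective (Subtype.ext h)) ⟨j, hjk⟩

/-- STATEMENT 11: An internal set is either finite or of cardinality at least `2^ℵ₀`. -/
theorem internal_set_finite_or_continuum {X : Type*} (A : ℕ → Set X) :
    (InternalSet A).Finite ∨ 2 ^ Cardinal.aleph0 ≤ Cardinal.mk (InternalSet A) := by
  refine or_iff_not_imp_left.2 fun hinf => ?_
  have hcard := eventually_le_encard A hinf
  obtain ⟨_, f₀, -, -⟩ := Set.Infinite.nonempty hinf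
  have hcode : ∀ n, ∃ e : (ℕ → Bool) → X, (A n).Nonempty → (∀ σ, e σ ∈ A n) ∧
      ∀ j < n, ((2 ^ (j + 1) : ℕ) : ℕ∞) ≤ (A n).encard → ∀ σ τ, e σ = e τ → σ j = τ j := by
    intro n
    by_cases hn : (A n).Nonempty
    · obtain ⟨e, he⟩ := exists_separating (A n) hn n
      exact ⟨e, fun _ => he⟩
    · exact ⟨fun _ => f₀ 0, fun h => absurd h hn⟩
  choose e he using hcode
  have hnonempty : ∀ᶠ n in (hyperfilter ℕ : Filter ℕ), (A n).Nonempty := by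
    filter_upwards [hcard 1] with n hn
    exact Set.one_le_encard_iff_nonempty.1 (by simpa using hn)
  let F : (ℕ → Bool) → InternalSet A := fun σ =>
    ⟨((fun n => e n σ : ℕ → X) : Germ (hyperfilter ℕ : Filter ℕ) X), fun n => e n σ, rfl, by
      filter_upwards [hnonempty] with n hn using (he n hn).1 σ⟩
  have hF : Function.Injective F := by
    intro σ τ h
    funext j
    have heq : ∀ᶠ n in (hyperfilter ℕ : Filter ℕ), e n σ = e n τ :=
      Germ.coe_eq.1 (congrArg Subtype.val h)
    have hlarge : ∀ᶠ n in (hyperfilter ℕ : Filter ℕ), j < n :=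
      (eventually_gt_atTop j).filter_mono Nat.hyperfilter_le_atTop
    obtain ⟨n, h1, h2, h3, h4⟩ :=
      (heq.and (hlarge.and (hnonempty.and (hcard (2 ^ (j + 1)))))).exists
    exact (he n h3).2 j h2 h4 σ τ h1
  have := Cardinal.mk_le_of_injective (f := F ∘ ULift.down) (hF.comp ULift.down_injective)
  simpa using this

end
end

section
/- Let ν be an infinite hypernatural, i.e., an element of *ℕ = Germ 𝒰 ℕ with ν > n for every n ∈ ℕ (ℕ embedded as constant germs). Then the map sending a hypernatural α with α ≤ ν to st(α/ν) (where α and ν are coerced germ-wise into the hyperreals ℝ* and st is the standard part) maps the set {α ∈ *ℕ : α ≤ ν} onto the interval [0,1]; in particular, the set {α ∈ *ℕ : α ≤ ν} has cardinality exactly 2^ℵ₀. -/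
/-!
Represent hypernaturals by sequences `a, n : ℕ → ℕ`; the hyperreal `α / ν` is then the germ of
`a k / n k`, and its standard part is the limit of that sequence along the ultrafilter
(`st_div_eq_of_tendsto`). If `α ≤ ν`, the quotients eventually lie in the compact interval
`[0, 1]`, so the limit along the ultrafilter exists and lies there. Conversely, since `n` tends to
infinity along the ultrafilter, `⌊r * n k⌋₊ / n k` tends to `r` for each `r ∈ [0, 1]`, so every such
`r` is attained. Surjectivity onto `[0, 1]` bounds the cardinality below by the continuum; the
upper bound holds because `*ℕ` is a quotient of `ℕ → ℕ`.
-/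

open Filter Hyperreal

noncomputable section

/-- The germ-wise coercion of a hypernatural into the hyperreals. -/
def hnatToHyperreal (α : Germ (hyperfilter ℕ : Filter ℕ) ℕ) : ℝ* :=
  α.map (fun k : ℕ => (k : ℝ))

open scoped Topology

set_option linter.deprecated false

theorem st_div_eq_of_tendsto {a n : ℕ → ℕ} {r : ℝ}
    (h : Tendsto (fun k => (a k : ℝ) / n k) (hyperfilter ℕ) (𝓝 r)) :
    st (hnatToHyperreal (a : Germ (hyperfilter ℕ : Filter ℕ) ℕ) /
      hnatToHyperreal (n : Germ (hyperfilter ℕ : Filter ℕ) ℕ)) = r :=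
  -- the germ-wise quotient unfolds definitionally to the germ of the pointwise quotients
  IsSt.st_eq (x := ofSeq fun k => (a k : ℝ) / n k) (isSt_ofSeq_iff_tendsto.2 h)

theorem st_div_mem_Icc {a n : ℕ → ℕ} (h : ∀ᶠ k in hyperfilter ℕ, a k ≤ n k) :
    st (hnatToHyperreal (a : Germ (hyperfilter ℕ : Filter ℕ) ℕ) /
      hnatToHyperreal (n : Germ (hyperfilter ℕ : Filter ℕ) ℕ)) ∈ Set.Icc (0 : ℝ) 1 := by
  have hmem : ∀ᶠ k in hyperfilter ℕ, (a k : ℝ) / n k ∈ Set.Icc (0 : ℝ) 1 := by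
    filter_upwards [h] with k hk
    exact ⟨by positivity, div_le_one_of_le₀ (by exact_mod_cast hk) (by positivity)⟩
  obtain ⟨r, hr, hlim⟩ := isCompact_Icc.ultrafilter_le_nhds
    ((hyperfilter ℕ).map fun k => (a k : ℝ) / n k) (le_principal_iff.2 hmem)
  rwa [st_div_eq_of_tendsto hlim]

theorem exists_st_div_eq {n : ℕ → ℕ} (hn : Tendsto n (hyperfilter ℕ) atTop) {r : ℝ}
    (hr : r ∈ Set.Icc (0 : ℝ) 1) :
    ∃ a : ℕ → ℕ, (∀ k, a k ≤ n k) ∧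
      st (hnatToHyperreal (a : Germ (hyperfilter ℕ : Filter ℕ) ℕ) /
        hnatToHyperreal (n : Germ (hyperfilter ℕ : Filter ℕ) ℕ)) = r := by
  refine ⟨fun k => ⌊r * n k⌋₊, fun k => ?_, st_div_eq_of_tendsto ?_⟩
  · exact Nat.floor_le_of_le (mul_le_of_le_one_left (by positivity) hr.2)
  · exact (tendsto_nat_floor_mul_div_atTop hr.1).comp (tendsto_natCast_atTop_atTop.comp hn)

/-- STATEMENT 12: If `ν` is an infinite hypernatural, then `α ↦ st(α/ν)` maps
`{α : *ℕ | α ≤ ν}` onto `[0,1]`; in particular this set has cardinality exactly `2^ℵ₀`. -/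
theorem st_div_infinite_hypernat_surj_onto_Icc
    (ν : Germ (hyperfilter ℕ : Filter ℕ) ℕ)
    (hν : ∀ n : ℕ, (Germ.const n : Germ (hyperfilter ℕ : Filter ℕ) ℕ) < ν) :
    (Set.range fun α : {α : Germ (hyperfilter ℕ : Filter ℕ) ℕ // α ≤ ν} =>
        st (hnatToHyperreal α.1 / hnatToHyperreal ν)) = Set.Icc (0 : ℝ) 1 ∧
    Cardinal.mk {α : Germ (hyperfilter ℕ : Filter ℕ) ℕ // α ≤ ν} = 2 ^ Cardinal.aleph0 := by
  have hrange : (Set.range fun α : {α : Germ (hyperfilter ℕ : Filter ℕ) ℕ // α ≤ ν} =>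
      st (hnatToHyperreal α.1 / hnatToHyperreal ν)) = Set.Icc (0 : ℝ) 1 := by
    induction ν using Germ.inductionOn with | _ n
    have hn : Tendsto n (hyperfilter ℕ) atTop :=
      tendsto_atTop.2 fun m => Germ.coe_le.1 (hν m).le
    apply Set.Subset.antisymm
    · rintro _ ⟨⟨α, hα⟩, rfl⟩
      induction α using Germ.inductionOn with | _ a
      exact st_div_mem_Icc (Germ.coe_le.1 hα)
    · intro r hr
      obtain ⟨a, ha, hst⟩ := exists_st_div_eq hn hr
      exact ⟨⟨a, Germ.coe_le.2 (Eventually.of_forall ha)⟩, hst⟩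
  refine ⟨hrange, le_antisymm ?_ ?_⟩
  · calc Cardinal.mk {α : Germ (hyperfilter ℕ : Filter ℕ) ℕ // α ≤ ν}
        ≤ Cardinal.mk (Germ (hyperfilter ℕ : Filter ℕ) ℕ) := Cardinal.mk_subtype_le _
      _ ≤ Cardinal.mk (ℕ → ℕ) := Cardinal.mk_le_of_surjective Quot.mk_surjective
      _ = 2 ^ Cardinal.aleph0 := by simp
  · calc (2 : Cardinal) ^ Cardinal.aleph0 = Cardinal.mk (Set.Icc (0 : ℝ) 1) := by
          rw [Cardinal.mk_Icc_real one_pos, Cardinal.two_power_aleph0]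
      _ ≤ Cardinal.mk {α : Germ (hyperfilter ℕ : Filter ℕ) ℕ // α ≤ ν} := by
          rw [← hrange]
          exact Cardinal.mk_range_le

end
end

section
/- If (ξₙ)ₙ∈ℕ is a sequence of infinitesimal hyperreals, then there exists a positive infinitesimal hyperreal ξ such that ξₙ < ξ for every n ∈ ℕ. -/
open Filter Hyperreal

/-!
The proof is a diagonal argument (countable saturation in one concrete case). Let `f i` represent
`ξ i`. For `m : ℕ`, the set of `k` with `f i k < 1 / (m + 1)` for all `i < m` belongs to the
ultrafilter, being a finite intersection of members. Let `N k` be the largest `m ≤ k` for which `k`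
lies in the `m`-th set. Then `N` is eventually at least any given `m`, so the germ of
`1 / (N k + 1)` is a positive infinitesimal, and it exceeds `f i k` as soon as `i < N k`.
-/

/-- STATEMENT 13: Given a sequence of infinitesimal hyperreals, there is a positive
infinitesimal greater than all of them. -/
theorem exists_infinitesimal_gt_seq (ξ : ℕ → ℝ*) (h : ∀ n, Infinitesimal (ξ n)) :
    ∃ x : ℝ*, Infinitesimal x ∧ 0 < x ∧ ∀ n, ξ n < x := by
  classical
  choose f hf using fun n => ofSeq_surjective (ξ n)
  let P : ℕ → ℕ → Prop := fun k m => ∀ i < m, f i k < 1 / ((m : ℝ) + 1)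
  let N : ℕ → ℕ := fun k => Nat.findGreatest (P k) k
  -- `P k 0` is vacuous, so `N k` always satisfies its defining property.
  have hPN : ∀ k, P k (N k) := fun k =>
    Nat.findGreatest_spec (P := P k) (Nat.zero_le k) (fun i hi => absurd hi (Nat.not_lt_zero i))
  have hN : ∀ m, ∀ᶠ k in hyperfilter ℕ, m ≤ N k := by
    intro m
    have hP : ∀ᶠ k in hyperfilter ℕ, P k m := by
      refine (eventually_all_finite (Set.finite_lt_nat m)).2 fun i _ => ?_
      have hlt := (h i (1 / ((m : ℝ) + 1)) (by positivity)).2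
      rw [← coe_add, zero_add, ← hf i] at hlt
      exact ofSeq_lt_ofSeq.1 hlt
    have hk : ∀ᶠ k in hyperfilter ℕ, m ≤ k :=
      Nat.hyperfilter_le_atTop (eventually_ge_atTop m)
    filter_upwards [hP, hk] with k hP hk using Nat.le_findGreatest hk hP
  have hpos : (0 : ℝ*) < ofSeq fun k => 1 / ((N k : ℝ) + 1) :=
    ofSeq_lt_ofSeq.2 (Eventually.of_forall fun k => by positivity)
  refine ⟨ofSeq fun k => 1 / ((N k : ℝ) + 1), fun δ hδ => ⟨?_, ?_⟩, hpos, fun n => ?_⟩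
  · refine lt_trans ?_ hpos
    rw [← coe_sub, ← coe_zero, coe_lt_coe]
    linarith
  · rw [← coe_add, zero_add]
    obtain ⟨m, hm⟩ := exists_nat_one_div_lt hδ
    refine ofSeq_lt_ofSeq.2 ?_
    filter_upwards [hN m] with k hk
    exact (Nat.one_div_le_one_div hk).trans_lt hm
  · rw [← hf n]
    refine ofSeq_lt_ofSeq.2 ?_
    filter_upwards [hN (n + 1)] with k hk using hPN k n hk
end

section
/- If (ρₙ)ₙ∈ℕ is a sequence of positive infinite hyperreals, then there exists a positive infinite hyperreal ρ such that ρ < ρₙ for every n ∈ ℕ. -/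
open Filter Hyperreal

/-!
The proof is a diagonal argument. Represent `ρ i` by a real sequence `f i`, and let `g j` be the
largest `k ≤ j` such that `k < f i j` for all `i < k`. For fixed `k`, this condition involves only
finitely many `f i`, all of them infinite, so it holds for almost all `j`; hence `k ≤ g j` for
almost all `j`, and the class of `g` is infinite. Moreover `g j < f i j` as soon as `i < g j`,
which holds for almost all `j`.
-/

/-- STATEMENT 14: Given a sequence of positive infinite hyperreals, there is a positive
infinite hyperreal smaller than all of them. -/
theorem exists_infinite_lt_seq (ρ : ℕ → ℝ*) (h : ∀ n, InfinitePos (ρ n)) :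
    ∃ r : ℝ*, InfinitePos r ∧ ∀ n, r < ρ n := by
  classical
  choose f hf using fun n => ofSeq_surjective (ρ n)
  have hlt (i k : ℕ) : ∀ᶠ j in hyperfilter ℕ, (k : ℝ) < f i j := by
    have hk : ofSeq (fun _ => (k : ℝ)) < ofSeq (f i) := by
      rw [hf i]
      exact h i k
    exact ofSeq_lt_ofSeq.1 hk
  let P (j k : ℕ) : Prop := ∀ i < k, (k : ℝ) < f i j
  let g (j : ℕ) : ℕ := Nat.findGreatest (P j) j
  have hg_spec (j : ℕ) : P j (g j) :=
    Nat.findGreatest_spec (Nat.zero_le j) fun i hi => absurd hi (Nat.not_lt_zero i)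
  have hg_large (k : ℕ) : ∀ᶠ j in hyperfilter ℕ, k ≤ g j := by
    have hP : ∀ᶠ j in hyperfilter ℕ, P j k :=
      (eventually_all_finite (Set.finite_lt_nat k)).2 fun i _ => hlt i k
    have hj : ∀ᶠ j in hyperfilter ℕ, k ≤ j :=
      (eventually_ge_atTop k).filter_mono Nat.hyperfilter_le_atTop
    filter_upwards [hP, hj] with j hPj hkj
    exact Nat.le_findGreatest hkj hPj
  refine ⟨ofSeq fun j => (g j : ℝ), fun x => ?_, fun n => ?_⟩
  · obtain ⟨k, hk⟩ := exists_nat_gt x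
    refine ofSeq_lt_ofSeq.2 ?_
    filter_upwards [hg_large k] with j hj
    exact hk.trans_le (Nat.cast_le.2 hj)
  · rw [← hf n]
    refine ofSeq_lt_ofSeq.2 ?_
    filter_upwards [hg_large (n + 1)] with j hj
    exact hg_spec j n hj
end

section
/- (Overspill) Let A : ℕ → Set ℝ be a sequence of sets of reals and let S ⊆ ℝ* be the internal subset of ℝ* = Germ 𝒰 ℝ determined by A. If for every n ∈ ℕ there exists x ∈ S with x > n, then S contains a positive infinite hyperreal, i.e., some x ∈ S with x > r for every real r. -/
/-!
Overspill by a diagonal choice. At each index `i`, let `k i ≤ i` be the greatest natural number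
such that `A i` has an element above `k i`, and let `f i ∈ A i` be such an element. For fixed
`m`, the hypothesis says that `A i` has an element above `m` for almost every `i`. As the
ultrafilter is free, almost every such `i` also satisfies `m ≤ i`, so `m ≤ k i < f i` there.
Hence the class of `f` lies in the internal set and exceeds every natural number.
-/

open Filter Hyperreal

noncomputable section

/-- The internal subset of `ℝ* = Germ 𝒰 ℝ` determined by a sequence of sets `A : ℕ → Set ℝ`. -/
def InternalSetR (A : ℕ → Set ℝ) : Set ℝ* :=
  {x | ∃ f : ℕ → ℝ, x = Hyperreal.ofSeq f ∧ {n | f n ∈ A n} ∈ hyperfilter ℕ}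

/-- STATEMENT 15 (Overspill): If an internal subset of `ℝ*` contains elements larger than
every natural number, then it contains a positive infinite hyperreal. -/
theorem overspill (A : ℕ → Set ℝ)
    (h : ∀ n : ℕ, ∃ x ∈ InternalSetR A, ((n : ℝ) : ℝ*) < x) :
    ∃ x ∈ InternalSetR A, InfinitePos x := by
  classical
  let P : ℕ → ℕ → Prop := fun i k => ∃ y ∈ A i, (k : ℝ) < y
  have hP : ∀ m : ℕ, ∀ᶠ i in (hyperfilter ℕ : Filter ℕ), P i m := by
    intro m
    obtain ⟨x, ⟨g, rfl, hg⟩, hlt⟩ := h m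
    have hlt' : ∀ᶠ i in (hyperfilter ℕ : Filter ℕ), (m : ℝ) < g i := ofSeq_lt_ofSeq.1 hlt
    have hg' : ∀ᶠ i in (hyperfilter ℕ : Filter ℕ), g i ∈ A i := hg
    filter_upwards [hlt', hg'] with i h₁ h₂
    exact ⟨g i, h₂, h₁⟩
  let k : ℕ → ℕ := fun i => Nat.findGreatest (P i) i
  -- Where `A i` has no element above `k i`, the value of `f` is irrelevant.
  have hf : ∀ i, ∃ y : ℝ, P i (k i) → y ∈ A i ∧ (k i : ℝ) < y := by
    intro i
    by_cases hi : P i (k i)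
    · obtain ⟨y, hy⟩ := hi
      exact ⟨y, fun _ => hy⟩
    · exact ⟨0, fun hi' => absurd hi' hi⟩
  choose f hf using hf
  have key : ∀ m : ℕ, ∀ᶠ i in (hyperfilter ℕ : Filter ℕ), f i ∈ A i ∧ (m : ℝ) < f i := by
    intro m
    have hge : ∀ᶠ i in (hyperfilter ℕ : Filter ℕ), m ≤ i :=
      Nat.hyperfilter_le_atTop (eventually_ge_atTop m)
    filter_upwards [hP m, hge] with i h₁ h₂
    obtain ⟨hA, hk⟩ := hf i (Nat.findGreatest_spec h₂ h₁)
    have hmk : m ≤ k i := Nat.le_findGreatest h₂ h₁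
    exact ⟨hA, lt_of_le_of_lt (Nat.cast_le.2 hmk) hk⟩
  refine ⟨ofSeq f, ⟨f, rfl, (key 0).mono fun _ hi => hi.1⟩, fun r => ?_⟩
  obtain ⟨m, hm⟩ := exists_nat_gt r
  exact ofSeq_lt_ofSeq.2 ((key m).mono fun _ hi => hm.trans hi.2)

end
end

section
/- Let X be a set and let S be an internal subset of *X = Germ 𝒰 X (i.e., S is determined by some sequence A : ℕ → Set X). If S is contained in the set of constant germs {↑x : x ∈ X} (the canonical copy of X inside *X), then S is finite. -/
/-!
The argument is a saturation (diagonal) argument. If the internal set were infinite, it would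
contain the constant germs of an injective sequence `x : ℕ → X`, so that each `x k` lies in `A n`
for almost every `n`. Let `f n = x k` for the greatest `k ≤ n` with `x k ∈ A n`. The germ of `f`
belongs to the internal set, hence is the constant germ of some `x j`; but almost every `n` satisfies
`j + 1 ≤ n` and `x (j + 1) ∈ A n`, and for such `n` the index of `f n` exceeds `j`, so `f n ≠ x j`.
-/

open Filter Hyperreal

noncomputable section

/-- STATEMENT 16: An internal subset of `*X` contained in the canonical copy of `X`
(the constant germs) is finite. -/
theorem internal_subset_of_standard_finite {X : Type*} (A : ℕ → Set X)
    (h : InternalSet A ⊆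
      Set.range fun x : X => (Germ.const x : Germ (hyperfilter ℕ : Filter ℕ) X)) :
    (InternalSet A).Finite := by
  classical
  by_contra hinf
  obtain ⟨ξ, hξ⟩ : ∃ ξ : ℕ → Germ (hyperfilter ℕ : Filter ℕ) X,
      Function.Injective ξ ∧ ∀ k, ξ k ∈ InternalSet A :=
    ⟨fun k => (Set.Infinite.natEmbedding _ hinf k : Germ (hyperfilter ℕ : Filter ℕ) X),
      fun a b hab => (Set.Infinite.natEmbedding _ hinf).injective (Subtype.ext hab),
      fun k => (Set.Infinite.natEmbedding _ hinf k).2⟩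
  obtain ⟨hξinj, hξmem⟩ := hξ
  choose x hx using fun k => h (hξmem k)
  have hxinj : Function.Injective x := fun a b hab => hξinj (by
    rw [← hx a, ← hx b, hab])
  have hxA : ∀ k, ∀ᶠ n in (hyperfilter ℕ : Filter ℕ), x k ∈ A n := by
    intro k
    obtain ⟨g, hg, hgA⟩ := hξmem k
    have hgx : (fun _ : ℕ => x k) =ᶠ[(hyperfilter ℕ : Filter ℕ)] g :=
      Germ.coe_eq.1 ((hx k).trans hg)
    have hgA' : ∀ᶠ n in (hyperfilter ℕ : Filter ℕ), g n ∈ A n := hgA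
    filter_upwards [hgx, hgA'] with n h1 h2
    rw [h1]
    exact h2
  let f : ℕ → X := fun n => x (Nat.findGreatest (fun k => x k ∈ A n) n)
  have hfmem : (↑f : Germ (hyperfilter ℕ : Filter ℕ) X) ∈ InternalSet A := by
    refine ⟨f, rfl, ?_⟩
    -- Where `x 0 ∈ A n`, the default value `0` of `Nat.findGreatest` is also a valid index.
    filter_upwards [hxA 0] with n hn
    exact Nat.findGreatest_spec (P := fun k => x k ∈ A n) (Nat.zero_le n) hn
  obtain ⟨y, hy⟩ := h hfmem
  have hyf : ∀ᶠ n in (hyperfilter ℕ : Filter ℕ), y = f n := Germ.coe_eq.1 hy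
  obtain ⟨m, hm⟩ := hyf.exists
  have hlarge : ∀ j, ∀ᶠ n in (hyperfilter ℕ : Filter ℕ), j ≤ n := fun j =>
    Nat.hyperfilter_le_atTop (eventually_ge_atTop j)
  set j := Nat.findGreatest (fun k => x k ∈ A m) m
  obtain ⟨n, hn, hnA, hjn⟩ := (hyf.and ((hxA (j + 1)).and (hlarge (j + 1)))).exists
  have hle : j + 1 ≤ Nat.findGreatest (fun k => x k ∈ A n) n := Nat.le_findGreatest hjn hnA
  have heq : j = Nat.findGreatest (fun k => x k ∈ A n) n := hxinj (hm.symm.trans hn)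
  omega

end
end

section
/- (Countable saturation) Let X be a set and for each k ∈ ℕ let S_k ⊆ *X = Germ 𝒰 X be an internal subset (determined by a sequence A_k : ℕ → Set X). If the family (S_k) has the finite intersection property, i.e., S_{k₀} ∩ … ∩ S_{kₙ} ≠ ∅ for all n ∈ ℕ and k₀,…,kₙ ∈ ℕ, then ⋂_{k∈ℕ} S_k ≠ ∅. -/
/-!
For an index `n`, let `P n m` say that `A 0 n, …, A m n` have a common point. By the finite
intersection property and closure of the ultrafilter under finite intersections, `P n m` holds
for almost all `n`, for each fixed `m` (`eventually_common_point`). The diagonal choice: let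
`M n` be the largest `m ≤ n` with `P n m`, and let `f n` be a common point of
`A 0 n, …, A (M n) n`. For fixed `k`, almost all `n` satisfy both `k ≤ n` (the ultrafilter is
free) and `P n k`, so `k ≤ M n` and `f n ∈ A k n`; hence the germ of `f` lies in every internal set.
-/

open Filter Hyperreal

noncomputable section

theorem eventually_common_point {X : Type*} (A : ℕ → ℕ → Set X)
    (hFIP : ∀ (n : ℕ) (k : Fin (n + 1) → ℕ),
      (⋂ i : Fin (n + 1), InternalSet (A (k i))).Nonempty) (m : ℕ) :
    ∀ᶠ n in (hyperfilter ℕ : Filter ℕ), ∃ x, ∀ k ≤ m, x ∈ A k n := by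
  obtain ⟨ξ, hξ⟩ := hFIP m (fun i => i)
  induction ξ using Germ.inductionOn with
  | _ g =>
  have hg : ∀ i : Fin (m + 1), ∀ᶠ n in (hyperfilter ℕ : Filter ℕ), g n ∈ A i n := by
    intro i
    obtain ⟨f, hgf, hf⟩ := Set.mem_iInter.1 hξ i
    have hf' : ∀ᶠ n in (hyperfilter ℕ : Filter ℕ), f n ∈ A i n := hf
    filter_upwards [Germ.coe_eq.1 hgf, hf'] with n h₁ h₂
    rwa [h₁]
  filter_upwards [eventually_all.2 hg] with n hn
  exact ⟨g n, fun k hk => hn ⟨k, Nat.lt_succ_of_le hk⟩⟩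

/-- STATEMENT 18 (Countable saturation): A countable family of internal subsets of `*X` with
the finite intersection property has nonempty intersection. -/
theorem countable_saturation {X : Type*} (A : ℕ → ℕ → Set X)
    (hFIP : ∀ (n : ℕ) (k : Fin (n + 1) → ℕ),
      (⋂ i : Fin (n + 1), InternalSet (A (k i))).Nonempty) :
    (⋂ k : ℕ, InternalSet (A k)).Nonempty := by
  classical
  have hE := eventually_common_point A hFIP
  -- `X` is inhabited, which provides a value for `f n` where no common point exists.
  obtain ⟨-, x₀, -⟩ := (hE 0).exists
  let P : ℕ → ℕ → Prop := fun n m => ∃ x, ∀ k ≤ m, x ∈ A k n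
  let M : ℕ → ℕ := fun n => Nat.findGreatest (P n) n
  let f : ℕ → X := fun n => if h : P n (M n) then h.choose else x₀
  refine ⟨(f : Germ (hyperfilter ℕ : Filter ℕ) X), Set.mem_iInter.2 fun k => ⟨f, rfl, ?_⟩⟩
  have hk : ∀ᶠ n in (hyperfilter ℕ : Filter ℕ), k ≤ n :=
    Nat.hyperfilter_le_atTop (eventually_ge_atTop k)
  change ∀ᶠ n in (hyperfilter ℕ : Filter ℕ), f n ∈ A k n
  filter_upwards [hE k, hk] with n hn hkn
  have hM : P n (M n) := Nat.findGreatest_spec (P := P n) hkn hn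
  have hkM : k ≤ M n := Nat.le_findGreatest hkn hn
  have hfn : f n = hM.choose := dif_pos hM
  rw [hfn]
  exact hM.choose_spec k hkM

end
end
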